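/- Let X be a nonempty complete metric space and Λ a compact metric space, and let w : Λ × X → X be a weakly* hyperbolic IFS. Assume that the space K(X) of nonempty compact subsets of X, with the Hausdorff metric, is ε-chainable for every ε > 0. Then the Hutchinson–Barnsley operator F has a global attractor: there exists a nonempty compact set K ⊆ X with F(K) = K such that Fⁿ(B) → K in the Hausdorff metric for every nonempty compact B ⊆ X. -/

import Mathlib

open Metric Set Filter Topology TopologicalSpace

/-- `seqComp w σ n = w_{σ₁} ∘ ⋯ ∘ w_{σₙ}` (with `σ i` denoting `σ_{i+1}`). -/
def seqComp {Λ X : Type*} (w : Λ → X → X) (σ : ℕ → Λ) : ℕ → X → X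
  | 0 => id
  | n + 1 => seqComp w σ n ∘ w (σ n)

/-- The Hutchinson–Barnsley operator on sets: `F(A) = w(Λ × A)`. -/
def HBset {Λ X : Type*} (w : Λ → X → X) (A : Set X) : Set X :=
  (fun p : Λ × X => w p.1 p.2) '' (Set.univ ×ˢ A)

theorem aux_tendsto {Y : Type*} [MetricSpace Y] (f : Y → Y) (η : ℝ) (hη : 0 < η)
    (h : ∀ ε > (0 : ℝ), ∃ N : ℕ, ∀ n ≥ N, ∀ a b : Y, dist a b < η →
      dist (f^[n] a) (f^[n] b) ≤ ε)
    (hchain : ∀ ε > (0 : ℝ), ∀ A B : Y, ∃ (n : ℕ) (c : ℕ → Y), c 0 = A ∧ c n = B ∧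
        ∀ i < n, dist (c i) (c (i + 1)) < ε) (A B : Y) :
    Tendsto (fun n => dist (f^[n] A) (f^[n] B)) atTop (𝓝 0) := by
  obtain ⟨n, c, rfl, rfl, hc⟩ := hchain η hη A B
  have key : ∀ i, i ≤ n → Tendsto (fun m => dist (f^[m] (c 0)) (f^[m] (c i))) atTop (𝓝 0) := by
    intro i
    induction i with
    | zero => intro _; simp
    | succ i ih =>
      intro hi
      have h1 := ih (by omega)
      have h2 : Tendsto (fun m => dist (f^[m] (c i)) (f^[m] (c (i + 1)))) atTop (𝓝 0) := by
        rw [Metric.tendsto_atTop]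
        intro ε hε
        obtain ⟨N, hN⟩ := h (ε / 2) (half_pos hε)
        refine ⟨N, fun m hm => ?_⟩
        have := hN m hm _ _ (hc i (by omega))
        rw [Real.dist_0_eq_abs, abs_of_nonneg dist_nonneg]
        linarith
      have h3 := h1.add h2
      rw [add_zero] at h3
      exact squeeze_zero (fun _ => dist_nonneg) (fun m => dist_triangle _ _ _) h3
  exact key n le_rfl

theorem aux_fixed {Y : Type*} [MetricSpace Y] [CompleteSpace Y] (f : Y → Y) (hf : Continuous f)
    (A : Y) (η : ℝ) (hη : 0 < η)
    (h : ∀ ε > (0 : ℝ), ∃ N : ℕ, ∀ n ≥ N, ∀ a b : Y, dist a b < η →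
      dist (f^[n] a) (f^[n] b) ≤ ε)
    (hchain : ∀ ε > (0 : ℝ), ∀ A B : Y, ∃ (n : ℕ) (c : ℕ → Y), c 0 = A ∧ c n = B ∧
        ∀ i < n, dist (c i) (c (i + 1)) < ε) :
    ∃ K : Y, f K = K ∧ ∀ B : Y, Tendsto (fun n => f^[n] B) atTop (𝓝 K) := by
  have hT := aux_tendsto f η hη h hchain
  have hC : CauchySeq (fun n => f^[n] A) := by
    rw [Metric.cauchySeq_iff']
    intro ε hε
    obtain ⟨δ, hδ, hδη, hδε⟩ : ∃ δ > (0 : ℝ), δ < η ∧ 2 * δ < ε := by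
      refine ⟨min η ε / 4, by positivity, ?_, ?_⟩
      · have := min_le_left η ε
        linarith
      · have := min_le_right η ε
        linarith
    obtain ⟨N₀, hN₀⟩ := h (δ / 2) (half_pos hδ)
    set N := N₀ + 1 with hN
    have hev : ∀ᶠ m in atTop, ∀ j ∈ Finset.range (N + 1),
        dist (f^[m] A) (f^[m] (f^[j] A)) < δ / 2 := by
      rw [Filter.eventually_all_finset]
      intro j _
      exact (hT A (f^[j] A)).eventually_lt_const (half_pos hδ)
    obtain ⟨m₀, hm₀⟩ := eventually_atTop.1 hev
    have hstep : ∀ m ≥ m₀, ∀ j ≤ N, dist (f^[m] A) (f^[m + j] A) < δ / 2 := by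
      intro m hm j hj
      rw [Function.iterate_add_apply]
      exact hm₀ m hm j (by simp; omega)
    have hball : ∀ k : ℕ, dist (f^[m₀] A) (f^[m₀ + N * k] A) < δ := by
      intro k
      induction k with
      | zero => simpa using hδ
      | succ k ih =>
        have h1 := hstep m₀ le_rfl N le_rfl
        have h2 := hN₀ N (by omega) _ _ (ih.trans hδη)
        rw [← Function.iterate_add_apply, ← Function.iterate_add_apply, add_comm N m₀,
          show N + (m₀ + N * k) = m₀ + N * (k + 1) by ring] at h2
        linarith [dist_triangle (f^[m₀] A) (f^[m₀ + N] A) (f^[m₀ + N * (k + 1)] A)]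
    refine ⟨m₀, fun n hn => ?_⟩
    have h1 := hball ((n - m₀) / N)
    have h2 := hstep (m₀ + N * ((n - m₀) / N)) (by omega) ((n - m₀) % N)
      (Nat.mod_lt _ (by omega)).le
    rw [add_assoc, Nat.div_add_mod, Nat.add_sub_cancel' hn] at h2
    rw [dist_comm]
    linarith [dist_triangle (f^[m₀] A) (f^[m₀ + N * ((n - m₀) / N)] A) (f^[n] A)]
  obtain ⟨K, hK⟩ := cauchySeq_tendsto_of_complete hC
  refine ⟨K, isFixedPt_of_tendsto_iterate hK hf.continuousAt, fun B => ?_⟩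
  exact hK.congr_dist (hT A B)

theorem seqComp_congr' {Λ X : Type*} (w : Λ → X → X) (σ τ : ℕ → Λ) (n : ℕ)
    (h : ∀ i < n, σ i = τ i) : seqComp w σ n = seqComp w τ n := by
  induction n with
  | zero => rfl
  | succ n ih =>
    simp only [seqComp]
    rw [ih (fun i hi => h i (by omega)), h n (by omega)]

theorem mem_iterate_HBset {Λ X : Type*} [Nonempty Λ] (w : Λ → X → X) (n : ℕ) (A : Set X) (x : X) :
    x ∈ (HBset w)^[n] A ↔ ∃ σ : ℕ → Λ, ∃ a ∈ A, seqComp w σ n a = x := by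
  induction n generalizing A with
  | zero => simp [seqComp]
  | succ n ih =>
    rw [Function.iterate_succ_apply, ih]
    constructor
    · rintro ⟨σ, _, ⟨⟨l, a⟩, ⟨_, ha⟩, rfl⟩, rfl⟩
      refine ⟨Function.update σ n l, a, ha, ?_⟩
      simp only [seqComp, Function.comp_apply, Function.update_self]
      rw [seqComp_congr' w (Function.update σ n l) σ n]
      intro i hi
      exact Function.update_of_ne hi.ne _ _
    · rintro ⟨σ, a, ha, rfl⟩
      exact ⟨σ, w (σ n) a, ⟨(σ n, a), ⟨mem_univ _, ha⟩, rfl⟩, rfl⟩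

/-- A weakly* hyperbolic IFS on a nonempty complete metric space whose
hyperspace of nonempty compact subsets is ε-chainable for every ε > 0 has a
global attractor which is a compact invariant set. -/
theorem stmt_14 {Λ X : Type*} [MetricSpace Λ] [CompactSpace Λ] [Nonempty Λ]
    [MetricSpace X] [CompleteSpace X] [Nonempty X]
    (w : Λ → X → X) (hw : Continuous fun p : Λ × X => w p.1 p.2)
    (hyp : ∃ η > (0 : ℝ), ∀ ε > (0 : ℝ), ∃ n₀ : ℕ, ∀ n ≥ n₀, ∀ σ : ℕ → Λ, ∀ x y : X,
      dist x y < η → dist (seqComp w σ n x) (seqComp w σ n y) < ε)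
    (hchain : ∀ ε > (0 : ℝ), ∀ A B : NonemptyCompacts X,
      ∃ (n : ℕ) (c : ℕ → NonemptyCompacts X), c 0 = A ∧ c n = B ∧
        ∀ i < n, dist (c i) (c (i + 1)) < ε) :
    ∃ K : Set X, K.Nonempty ∧ IsCompact K ∧ HBset w K = K ∧
      ∀ B : Set X, B.Nonempty → IsCompact B →
        Tendsto (fun n => hausdorffDist ((HBset w)^[n] B) K) atTop (𝓝 0) := by
  obtain ⟨η, hη, hyp⟩ := hyp
  let f : NonemptyCompacts X → NonemptyCompacts X := fun A =>
    NonemptyCompacts.map (fun p : Λ × X => w p.1 p.2) hw ((⊤ : NonemptyCompacts Λ) ×ˢ A)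
  have hf : Continuous f :=
    (Continuous.nonemptyCompacts_map hw).comp
      (NonemptyCompacts.continuous_prod.comp (Continuous.prodMk_right _))
  have hfc : ∀ A : NonemptyCompacts X, (f A : Set X) = HBset w A := by
    intro A
    simp [f, HBset]
  have hfn : ∀ (n : ℕ) (A : NonemptyCompacts X), ((f^[n] A : NonemptyCompacts X) : Set X)
      = (HBset w)^[n] A := by
    intro n
    induction n with
    | zero => intro A; rfl
    | succ n ih =>
      intro A
      rw [Function.iterate_succ_apply, Function.iterate_succ_apply, ih, hfc]
  have half : ∀ ε > (0 : ℝ), ∃ N : ℕ, ∀ n ≥ N, ∀ A B : NonemptyCompacts X, dist A B < η →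
      ∀ x ∈ (HBset w)^[n] (A : Set X), ∃ y ∈ (HBset w)^[n] (B : Set X), dist x y ≤ ε := by
    intro ε hε
    obtain ⟨N, hN⟩ := hyp ε hε
    refine ⟨N, fun n hn A B hAB x hx => ?_⟩
    obtain ⟨σ, a, ha, rfl⟩ := (mem_iterate_HBset w n _ x).1 hx
    rw [NonemptyCompacts.dist_eq] at hAB
    obtain ⟨b, hb, hab⟩ := exists_dist_lt_of_hausdorffDist_lt ha hAB
      (hausdorffEDist_ne_top_of_nonempty_of_bounded A.nonempty B.nonempty
        A.isCompact.isBounded B.isCompact.isBounded)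
    exact ⟨_, (mem_iterate_HBset w n _ _).2 ⟨σ, b, hb, rfl⟩, (hN n hn σ a b hab).le⟩
  have hcon : ∀ ε > (0 : ℝ), ∃ N : ℕ, ∀ n ≥ N, ∀ A B : NonemptyCompacts X, dist A B < η →
      dist (f^[n] A) (f^[n] B) ≤ ε := by
    intro ε hε
    obtain ⟨N, hN⟩ := half ε hε
    refine ⟨N, fun n hn A B hAB => ?_⟩
    rw [NonemptyCompacts.dist_eq, hfn, hfn]
    exact hausdorffDist_le_of_mem_dist hε.le (hN n hn A B hAB)
      (hN n hn B A (by rwa [dist_comm]))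
  obtain ⟨x₀⟩ := ‹Nonempty X›
  obtain ⟨K, hK, hKB⟩ := aux_fixed f hf {x₀} η hη hcon hchain
  refine ⟨K, K.nonempty, K.isCompact, by rw [← hfc, hK], fun B hB hBc => ?_⟩
  have h := tendsto_iff_dist_tendsto_zero.1 (hKB ⟨⟨B, hBc⟩, hB⟩)
  simp only [NonemptyCompacts.dist_eq, hfn] at h
  exact h
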